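/- Let A be a reduced commutative algebra essentially of finite type over a field k, B its normalization, and I a conducting ideal. Then for all sufficiently large n, the natural map I^n·Ω^1_{A/k} → I^n·Ω^1_{B/k} (induced by Ω^1_{A/k} → Ω^1_{B/k}) is injective. -/

import Mathlib

theorem stmt2_aux (k A B : Type*) [Field k] [CommRing A] [CommRing B]
    [Algebra k A] [Algebra k B] [Algebra A B] [IsScalarTower k A B]
    (hinj : Function.Injective (algebraMap A B))
    (f : A) (hf : ∀ b : B, ∃ a : A, algebraMap A B a = b * algebraMap A B f)
    (x : Ω[A⁄k]) (hx : KaehlerDifferential.map k k A B x = 0) :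
    ∃ m : ℕ, f ^ m • x = 0 := by
  let C := Localization.Away (algebraMap A B f)
  have hloc : IsLocalization (Submonoid.powers f) C := by
    rw [isLocalization_iff]
    refine ⟨?_, ?_, ?_⟩
    · rintro ⟨_, n, rfl⟩
      rw [IsScalarTower.algebraMap_apply A B C, map_pow, map_pow]
      exact (IsLocalization.Away.algebraMap_isUnit (S := C) (algebraMap A B f)).pow n
    · intro z
      obtain ⟨⟨b, ⟨_, n, rfl⟩⟩, hz⟩ :=
        IsLocalization.surj (Submonoid.powers (algebraMap A B f)) z
      obtain ⟨a, ha⟩ := hf b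
      refine ⟨(a, ⟨f ^ (n + 1), n + 1, rfl⟩), ?_⟩
      simp only at hz ⊢
      rw [IsScalarTower.algebraMap_apply A B C, IsScalarTower.algebraMap_apply A B C a, ha,
        map_mul, ← hz, map_pow, pow_succ, map_mul]
      ring
    · intro a a' h
      rw [IsScalarTower.algebraMap_apply A B C, IsScalarTower.algebraMap_apply A B C a'] at h
      obtain ⟨⟨_, n, rfl⟩, hc⟩ :=
        IsLocalization.exists_of_eq (M := Submonoid.powers (algebraMap A B f)) h
      refine ⟨⟨f ^ n, n, rfl⟩, hinj ?_⟩
      simpa using hc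
  have hcomp : KaehlerDifferential.map k k B C (KaehlerDifferential.map k k A B x) =
      KaehlerDifferential.map k k A C x := by
    have : ((KaehlerDifferential.map k k B C).restrictScalars A) ∘ₗ
        KaehlerDifferential.map k k A B = KaehlerDifferential.map k k A C := by
      apply Derivation.liftKaehlerDifferential_unique
      ext a
      simp [← IsScalarTower.algebraMap_apply A B C]
    exact DFunLike.congr_fun this x
  rw [hx, map_zero] at hcomp
  obtain ⟨⟨_, m, rfl⟩, hm⟩ := (IsLocalizedModule.eq_zero_iff (Submonoid.powers f)
    (KaehlerDifferential.map k k A C)).mp hcomp.symm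
  exact ⟨m, hm⟩

/-- With `A` reduced essentially of finite type over a field `k`, `B` its
normalization and `I` a conducting ideal, for all sufficiently large `n` the natural map
`Iⁿ·Ω¹_{A/k} → Iⁿ·Ω¹_{B/k}` induced by `Ω¹_{A/k} → Ω¹_{B/k}` is injective, i.e. the map
`Ω¹_{A/k} → Ω¹_{B/k}` is injective on the submodule `Iⁿ·Ω¹_{A/k}`. -/
theorem stmt2 (k A B : Type*) [Field k]
    [CommRing A] [IsReduced A] [CommRing B]
    [Algebra k A] [Algebra k B] [Algebra A B] [IsScalarTower k A B]
    [Algebra.EssFiniteType k A]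
    [Algebra B (FractionRing A)] [IsScalarTower A B (FractionRing A)]
    [IsIntegralClosure B A (FractionRing A)]
    (I : Ideal B) (hI : ∀ x ∈ I, x ∈ (algebraMap A B).range) :
    ∃ N : ℕ, ∀ n ≥ N,
      ∀ x ∈ (I.comap (algebraMap A B)) ^ n • (⊤ : Submodule A (Ω[A⁄k])),
        KaehlerDifferential.map k k A B x = 0 → x = 0 := by
  have hinj : Function.Injective (algebraMap A B) := by
    have h := IsFractionRing.injective A (FractionRing A)
    rw [IsScalarTower.algebraMap_eq A B (FractionRing A)] at h
    exact Function.Injective.of_comp h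
  have : IsNoetherianRing A := Algebra.EssFiniteType.isNoetherianRing k A
  set J := I.comap (algebraMap A B) with hJ
  let K : Submodule A (Ω[A⁄k]) := LinearMap.ker (KaehlerDifferential.map k k A B)
  have hK : K.FG := IsNoetherian.noetherian K
  have hrad : J ≤ K.annihilator.radical := by
    intro f hfJ
    have key : ∀ x : K, ∃ m : ℕ, f ^ m • (x : Ω[A⁄k]) = 0 := fun x =>
      stmt2_aux k A B hinj f
        (fun b => hI _ (I.mul_mem_left b hfJ)) x x.2
    have key' : ∀ x : Ω[A⁄k], ∃ m : ℕ, x ∈ K → f ^ m • x = 0 := by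
      intro x
      by_cases hx : x ∈ K
      · obtain ⟨m, hm⟩ := key ⟨x, hx⟩
        exact ⟨m, fun _ => hm⟩
      · exact ⟨0, fun h => absurd h hx⟩
    choose m hm using key'
    obtain ⟨s, hs⟩ := hK
    refine ⟨s.sup m, ?_⟩
    rw [← hs, Submodule.mem_annihilator_span]
    rintro ⟨x, hx⟩
    have hxK : x ∈ K := hs ▸ Submodule.subset_span hx
    have hle : m x ≤ s.sup m := Finset.le_sup hx
    obtain ⟨d, hd⟩ := Nat.exists_eq_add_of_le' hle
    rw [hd, pow_add, mul_smul]
    simp [hm x hxK]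
  obtain ⟨m, hm⟩ := Ideal.exists_pow_le_of_le_radical_of_fg hrad (IsNoetherian.noetherian J)
  obtain ⟨c, hc⟩ := Ideal.exists_pow_inf_eq_pow_smul J K
  refine ⟨m + c, fun n hn x hx hx0 => ?_⟩
  have hmem : x ∈ J ^ n • (⊤ : Submodule A (Ω[A⁄k])) ⊓ K := ⟨hx, hx0⟩
  rw [hc n (by omega)] at hmem
  have hle : J ^ (n - c) • (J ^ c • (⊤ : Submodule A (Ω[A⁄k])) ⊓ K) ≤ K.annihilator • K :=
    Submodule.smul_mono ((Ideal.pow_le_pow_right (by omega)).trans hm) inf_le_right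
  have := hle hmem
  rwa [Submodule.annihilator_smul, Submodule.mem_bot] at this
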